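/- Let n ≥ 1 and ζ_1, …, ζ_n ∈ ℂ. Then: (i) for every 1 ≤ j ≤ n, x_j^{(n)}(ζ_1, …, ζ_n) = x_1^{(n−j+1)}(ζ_j, …, ζ_n); and (ii) for every N > n, x^{(N)}(ζ_1, …, ζ_n, 0, …, 0) = x^{(n)}(ζ_1, …, ζ_n), i.e., appending zeros to the parameter tuple does not change the resulting Laurent polynomial. -/

import Mathlib

/-- The singular part `(f)₋` of a Laurent series: the sum of its strictly
negative-degree terms. -/
noncomputable def singPart (f : LaurentSeries ℂ) : LaurentSeries ℂ where
  coeff k := if k < 0 then f.coeff k else 0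
  isPWO_support' := by
    apply f.isPWO_support'.mono
    intro k hk
    simp only [Function.mem_support] at hk ⊢
    by_cases h : k < 0
    · simpa [h] using hk
    · simp [h] at hk

/-- The recursively defined Laurent polynomials `x⁽ᵏ⁾(ζ₁, …, ζ_k)`:
`x⁽¹⁾ = ζ₁ z⁻¹` and
`x⁽ᵏ⁺¹⁾ = ((1+|ζ_{k+1}|²) Σ_{p=0}^k conj(ζ_{k+1})^p (x⁽ᵏ⁾)^{p+1} z^{p(k+1)})₋ + ζ_{k+1} z^{−k−1}`
(`ζ` is indexed starting at `1`; the base case is subsumed via `x⁽⁰⁾ = 0`). -/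
noncomputable def xrec (ζ : ℕ → ℂ) : ℕ → LaurentSeries ℂ
  | 0 => 0
  | m + 1 =>
      singPart (HahnSeries.single (0 : ℤ) (((1 + ‖ζ (m + 1)‖ ^ 2 : ℝ) : ℂ)) *
          ∑ p ∈ Finset.range (m + 1),
            HahnSeries.single (0 : ℤ) ((starRingEnd ℂ (ζ (m + 1))) ^ p) *
              xrec ζ m ^ (p + 1) * HahnSeries.single ((p : ℤ) * ((m : ℤ) + 1)) 1)
        + HahnSeries.single (-(m : ℤ) - 1) (ζ (m + 1))

/-- `f` has no terms of degree below `d`. -/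
def Low (d : ℤ) (f : LaurentSeries ℂ) : Prop := ∀ k < d, f.coeff k = 0

lemma Low.mono {d e : ℤ} {f : LaurentSeries ℂ} (h : Low d f) (he : e ≤ d) : Low e f :=
  fun k hk => h k (lt_of_lt_of_le hk he)

lemma Low.add {d : ℤ} {f g : LaurentSeries ℂ} (hf : Low d f) (hg : Low d g) : Low d (f + g) := by
  intro k hk
  rw [HahnSeries.coeff_add, hf k hk, hg k hk, add_zero]

lemma Low.mul {d e : ℤ} {f g : LaurentSeries ℂ} (hf : Low d f) (hg : Low e g) :
    Low (d + e) (f * g) := by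
  intro k hk
  rw [HahnSeries.coeff_mul]
  apply Finset.sum_eq_zero
  rintro ⟨i, j⟩ hij
  rw [Finset.mem_addAntidiagonal] at hij
  obtain ⟨h1, h2, h3⟩ := hij
  simp only at h3 ⊢
  by_cases hi : i < d
  · rw [hf i hi, zero_mul]
  · rw [hg j (by omega), mul_zero]

lemma low_single (d : ℤ) (a : ℂ) : Low d (HahnSeries.single d a) := by
  intro k hk
  exact HahnSeries.coeff_single_of_ne hk.ne

lemma low_zero (d : ℤ) : Low d 0 := fun _ _ => rfl

lemma Low.sum {ι : Type*} {d : ℤ} (s : Finset ι) (f : ι → LaurentSeries ℂ)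
    (h : ∀ i ∈ s, Low d (f i)) : Low d (∑ i ∈ s, f i) :=
  Finset.sum_induction f (Low d) (fun _ _ => Low.add) (low_zero d) h

lemma Low.pow {d : ℤ} {f : LaurentSeries ℂ} (hf : Low d f) (p : ℕ) :
    Low (p * d) (f ^ p) := by
  induction p with
  | zero => simpa using low_single 0 1
  | succ p ih =>
    rw [pow_succ]
    refine (ih.mul hf).mono ?_
    push_cast; linarith

lemma Low.singPart {d : ℤ} {f : LaurentSeries ℂ} (hf : Low d f) : Low d (singPart f) := by
  intro k hk
  simp [_root_.singPart, hf k hk]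

lemma singPart_congr {f g : LaurentSeries ℂ} (h : Low 0 (f - g)) : singPart f = singPart g := by
  ext k
  simp only [singPart]
  split_ifs with hk
  · exact sub_eq_zero.mp (by simpa using h k hk)
  · rfl

lemma singPart_add (f g : LaurentSeries ℂ) : singPart (f + g) = singPart f + singPart g := by
  ext k
  by_cases hk : k < 0 <;> simp [singPart, hk]

lemma low_sub_singPart (f : LaurentSeries ℂ) : Low 0 (f - singPart f) := by
  intro k hk
  simp [singPart, hk]

lemma singPart_idem (f : LaurentSeries ℂ) : singPart (singPart f) = singPart f := by
  ext k
  by_cases hk : k < 0 <;> simp [singPart, hk]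

lemma singPart_single_neg {d : ℤ} (hd : d < 0) (a : ℂ) :
    singPart (HahnSeries.single d a) = HahnSeries.single d a := by
  ext k
  by_cases hk : k < 0
  · simp [singPart, hk]
  · simp only [singPart, hk, if_false]
    exact (HahnSeries.coeff_single_of_ne (by omega)).symm

lemma singPart_low {f : LaurentSeries ℂ} (h : Low 0 f) : singPart f = 0 := by
  ext k
  by_cases hk : k < 0
  · simp [singPart, hk, h k hk]
  · simp [singPart, hk]

lemma singPart_z_mul (f : LaurentSeries ℂ) :
    singPart (HahnSeries.single (1 : ℤ) 1 * singPart f)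
      = singPart (HahnSeries.single (1 : ℤ) 1 * f) := by
  symm
  apply singPart_congr
  rw [← mul_sub]
  exact ((low_single 1 1).mul (low_sub_singPart f)).mono (by norm_num)

lemma singPart_xrec (ζ : ℕ → ℂ) (m : ℕ) : singPart (xrec ζ m) = xrec ζ m := by
  cases m with
  | zero => exact singPart_low (low_zero 0)
  | succ m =>
    rw [xrec, singPart_add, singPart_idem, singPart_single_neg (by omega)]

lemma low_xrec (ζ : ℕ → ℂ) (m : ℕ) : Low (-(m : ℤ)) (xrec ζ m) := by
  induction m with
  | zero => exact low_zero _
  | succ m ih =>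
    rw [xrec]
    apply Low.add
    · apply Low.singPart
      have : Low (-((m + 1 : ℕ) : ℤ)) (∑ p ∈ Finset.range (m + 1),
            HahnSeries.single (0 : ℤ) ((starRingEnd ℂ (ζ (m + 1))) ^ p) *
              xrec ζ m ^ (p + 1) * HahnSeries.single ((p : ℤ) * ((m : ℤ) + 1)) 1) := by
        apply Low.sum
        intro p _
        refine (((low_single 0 _).mul (ih.pow (p + 1))).mul (low_single _ 1)).mono ?_
        push_cast; nlinarith
      exact ((low_single 0 _).mul this).mono (by simp)
    · exact (low_single _ _).mono (by push_cast; linarith)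

lemma low_pow_sub {k : ℕ} {f y : LaurentSeries ℂ} (hy : Low (-(k : ℤ)) y) (ha : Low 0 (f - y))
    (p : ℕ) : Low (-((p : ℤ) * k)) (f ^ (p + 1) - y ^ (p + 1)) := by
  have hf : Low (-(k : ℤ)) f := by
    have := hy.add (ha.mono (by omega : -(k : ℤ) ≤ 0))
    simpa using this
  induction p with
  | zero => simpa using ha
  | succ p ih =>
    have e : f ^ (p + 1 + 1) - y ^ (p + 1 + 1)
        = f * (f ^ (p + 1) - y ^ (p + 1)) + (f - y) * y ^ (p + 1) := by ring
    rw [e]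
    apply Low.add
    · refine (hf.mul ih).mono ?_
      push_cast; linarith
    · refine (ha.mul (hy.pow (p + 1))).mono ?_
      push_cast; linarith

lemma xrec_shift (ζ : ℕ → ℂ) (k : ℕ) :
    xrec (fun i => ζ (i + 1)) k = singPart (HahnSeries.single (1 : ℤ) 1 * xrec ζ (k + 1)) := by
  induction k with
  | zero =>
    symm
    rw [xrec]
    apply singPart_low
    have h : Low (-1) (xrec ζ 1) := by simpa using low_xrec ζ 1
    exact ((low_single 1 1).mul h).mono (by norm_num)
  | succ k ih =>
    have hs : HahnSeries.single (1 : ℤ) (1 : ℂ) *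
        HahnSeries.single (-((k + 1 : ℕ) : ℤ) - 1) (ζ (k + 1 + 1))
        = HahnSeries.single (-(k : ℤ) - 1) (ζ (k + 1 + 1)) := by
      rw [HahnSeries.single_mul_single, one_mul]
      congr 1
      push_cast; ring
    rw [xrec.eq_2 ζ (k + 1), mul_add, singPart_add, singPart_z_mul, hs,
      singPart_single_neg (by omega), xrec.eq_2 _ k]
    congr 1
    have hy := low_xrec (fun i => ζ (i + 1)) k
    have ha : Low 0 (HahnSeries.single (1 : ℤ) 1 * xrec ζ (k + 1)
        - xrec (fun i => ζ (i + 1)) k) := by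
      rw [ih]; exact low_sub_singPart _
    generalize xrec (fun i => ζ (i + 1)) k = y at hy ha
    generalize xrec ζ (k + 1) = x at ha
    generalize ζ (k + 1 + 1) = t
    symm
    apply singPart_congr
    rw [mul_left_comm, ← mul_sub]
    have key : Low 0 (HahnSeries.single (1 : ℤ) 1 * ∑ p ∈ Finset.range (k + 1 + 1),
            HahnSeries.single (0 : ℤ) ((starRingEnd ℂ t) ^ p) *
              x ^ (p + 1) * HahnSeries.single ((p : ℤ) * (((k + 1 : ℕ) : ℤ) + 1)) 1
        - ∑ p ∈ Finset.range (k + 1),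
            HahnSeries.single (0 : ℤ) ((starRingEnd ℂ t) ^ p) *
              y ^ (p + 1) * HahnSeries.single ((p : ℤ) * ((k : ℤ) + 1)) 1) := by
      have hterm : ∀ p : ℕ, HahnSeries.single (1 : ℤ) 1 *
          (HahnSeries.single (0 : ℤ) ((starRingEnd ℂ t) ^ p) *
              x ^ (p + 1) * HahnSeries.single ((p : ℤ) * (((k + 1 : ℕ) : ℤ) + 1)) 1)
          = HahnSeries.single (0 : ℤ) ((starRingEnd ℂ t) ^ p) *
              (HahnSeries.single (1 : ℤ) 1 * x) ^ (p + 1)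
                * HahnSeries.single ((p : ℤ) * ((k : ℤ) + 1)) 1 := by
        intro p
        have e : (HahnSeries.single ((p : ℤ) * (((k + 1 : ℕ) : ℤ) + 1)) (1 : ℂ))
            = (HahnSeries.single (1 : ℤ) (1 : ℂ)) ^ p
              * HahnSeries.single ((p : ℤ) * ((k : ℤ) + 1)) 1 := by
          rw [HahnSeries.single_pow, HahnSeries.single_mul_single, one_pow, one_mul]
          congr 1
          simp; ring
        rw [e]; ring
      rw [Finset.mul_sum, Finset.sum_congr rfl (fun p _ => hterm p)]
      generalize HahnSeries.single (1 : ℤ) 1 * x = f at ha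
      have hdiff : ∀ p : ℕ, Low 0 (HahnSeries.single (0 : ℤ) ((starRingEnd ℂ t) ^ p) *
              f ^ (p + 1) * HahnSeries.single ((p : ℤ) * ((k : ℤ) + 1)) 1
            - HahnSeries.single (0 : ℤ) ((starRingEnd ℂ t) ^ p) *
              y ^ (p + 1) * HahnSeries.single ((p : ℤ) * ((k : ℤ) + 1)) 1) := by
        intro p
        rw [← sub_mul, ← mul_sub]
        refine (((low_single 0 _).mul (low_pow_sub hy ha p)).mul (low_single _ 1)).mono ?_
        nlinarith
      have hlast : Low 0 (HahnSeries.single (0 : ℤ) ((starRingEnd ℂ t) ^ (k + 1)) *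
              y ^ (k + 1 + 1) * HahnSeries.single (((k + 1 : ℕ) : ℤ) * ((k : ℤ) + 1)) 1) := by
        refine (((low_single 0 _).mul (hy.pow (k + 1 + 1))).mul (low_single _ 1)).mono ?_
        push_cast; nlinarith
      have h1 := Low.sum (Finset.range (k + 1 + 1)) _ (fun p _ => hdiff p)
      rw [Finset.sum_sub_distrib, Finset.sum_range_succ (fun p : ℕ =>
        HahnSeries.single (0 : ℤ) ((starRingEnd ℂ t) ^ p) *
              y ^ (p + 1) * HahnSeries.single ((p : ℤ) * ((k : ℤ) + 1)) 1)] at h1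
      have h2 := h1.add hlast
      rw [← sub_sub, sub_add_cancel] at h2
      exact h2
    exact ((low_single 0 _).mul key).mono (by norm_num)

lemma coeff_xrec_shift (ζ : ℕ → ℂ) (m i : ℕ) :
    (xrec ζ (m + 1)).coeff (-((i + 2 : ℕ) : ℤ))
      = (xrec (fun l => ζ (l + 1)) m).coeff (-((i + 1 : ℕ) : ℤ)) := by
  rw [xrec_shift]
  have h : (-((i + 1 : ℕ) : ℤ)) = -((i + 2 : ℕ) : ℤ) + 1 := by push_cast; ring
  have hneg : (-((i + 1 : ℕ) : ℤ)) < 0 := by omega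
  simp only [singPart, hneg, if_true]
  rw [h, add_comm, HahnSeries.coeff_single_mul_add, one_mul]

lemma coeff_xrec (i : ℕ) : ∀ (ζ : ℕ → ℂ) (m : ℕ),
    (xrec ζ (m + i)).coeff (-((i + 1 : ℕ) : ℤ))
      = (xrec (fun l => ζ (l + i)) m).coeff (-1) := by
  induction i with
  | zero => intro ζ m; simp
  | succ i ih =>
    intro ζ m
    rw [← add_assoc, coeff_xrec_shift, ih]
    simp only [add_assoc]

lemma xrec_congr {ζ η : ℕ → ℂ} (m : ℕ) (h : ∀ i, 1 ≤ i → i ≤ m → ζ i = η i) :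
    xrec ζ m = xrec η m := by
  induction m with
  | zero => rfl
  | succ m ih =>
    rw [xrec, xrec, ih (fun i h1 h2 => h i h1 (by omega)), h (m + 1) (by omega) le_rfl]

lemma xrec_succ_zero (ζ : ℕ → ℂ) (m : ℕ) (h : ζ (m + 1) = 0) : xrec ζ (m + 1) = xrec ζ m := by
  rw [xrec, h, Finset.sum_range_succ', Finset.sum_eq_zero]
  · have e : (HahnSeries.single (0 : ℤ) (1 : ℂ)) = 1 := rfl
    simp [e, singPart_xrec]
  · intro p _
    simp

theorem stmt11 (n : ℕ) (hn : 1 ≤ n) (ζ : ℕ → ℂ) :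
    (∀ j, 1 ≤ j → j ≤ n →
      (xrec ζ n).coeff (-(j : ℤ))
        = (xrec (fun i => ζ (i + j - 1)) (n - j + 1)).coeff (-1)) ∧
    (∀ N, n < N → xrec (fun i => if i ≤ n then ζ i else 0) N = xrec ζ n) := by
  constructor
  · intro j hj hjn
    obtain ⟨i, rfl⟩ : ∃ i, j = i + 1 := ⟨j - 1, by omega⟩
    have h := coeff_xrec i ζ (n - (i + 1) + 1)
    rw [show n - (i + 1) + 1 + i = n by omega] at h
    exact h
  · intro N hN
    obtain ⟨d, rfl⟩ := Nat.exists_eq_add_of_le hN.le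
    clear hN
    induction d with
    | zero => exact xrec_congr _ (fun i _ h => by simp [show i ≤ n from h])
    | succ d ih =>
      rw [← add_assoc, xrec_succ_zero _ _ (if_neg (by omega)), ih]
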